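/- (Lemma 3.2) Assume the integrality condition on (μ,ν). For every j ∈ ℕ, the function Λ_j^{μ,ν} belongs to L¹(ℝ_+, x^{μ+ν+1}dx) and ∫₀^∞ Λ_j^{μ,ν}(x) x^{μ+ν+1} dx = (−1)^j · 2^{μ+ν} Γ(j+(μ+ν+2)/2)/j!. -/

import Mathlib

open MeasureTheory Real Filter Set Metric

noncomputable section

/-- Normalized Bessel function of the first kind: `J̃_α(x) = (x/2)^{-α} J_α(x)`,
given by its (entire) power series. -/
def besselJt (α x : ℝ) : ℝ :=
  ∑' m : ℕ, (-1) ^ m / (m.factorial * Real.Gamma (m + α + 1)) * (x / 2) ^ (2 * m)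

/-- Bessel function of the first kind `J_α`. -/
def besselJ (α x : ℝ) : ℝ :=
  ∑' m : ℕ, (-1) ^ m / (m.factorial * Real.Gamma (m + α + 1)) * (x / 2) ^ (2 * (m : ℝ) + α)

/-- Normalized modified Bessel function `Ĩ_α(x) = (x/2)^{-α} I_α(x)`,
given by its (entire, even) power series. -/
def besselIt (α x : ℝ) : ℝ :=
  ∑' m : ℕ, (x / 2) ^ (2 * m) / (m.factorial * Real.Gamma (m + α + 1))

/-- Modified Bessel function of the first kind `I_α`. -/
def besselI (α x : ℝ) : ℝ :=
  ∑' m : ℕ, (x / 2) ^ (2 * (m : ℝ) + α) / (m.factorial * Real.Gamma (m + α + 1))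

/-- Modified Bessel function of the second kind,
`K_α(x) = lim_{β→α} (π/2)(I_{−β}(x) − I_β(x))/sin(βπ)`. -/
def besselK (α x : ℝ) : ℝ :=
  limUnder (nhdsWithin α {α}ᶜ) fun β =>
    Real.pi / 2 * (besselI (-β) x - besselI β x) / Real.sin (β * Real.pi)

/-- Normalized K-Bessel function `K̃_α(x) = (x/2)^{-α} K_α(x)`. -/
def besselKt (α x : ℝ) : ℝ := (x / 2) ^ (-α) * besselK α x

/-- Normalized Gegenbauer polynomial `C̃_n^λ = Γ(λ) C_n^λ`, where `C_n^λ` is defined via the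
generating function `(1 − 2xt + t²)^{−λ} = Σ_{n≥0} C_n^λ(x) tⁿ`; explicitly,
`C̃_n^λ(x) = Σ_{k=0}^{⌊n/2⌋} (−1)^k Γ(λ+n−k)/(k!(n−2k)!) (2x)^{n−2k}`.
This expression also gives the limit value `C̃_n^0 = lim_{λ→0+} Γ(λ) C_n^λ` for `n ≥ 1`. -/
def gegenbauerCt (n : ℕ) (l x : ℝ) : ℝ :=
  ∑ k ∈ Finset.range (n / 2 + 1),
    (-1) ^ k * Real.Gamma (l + n - k) / (k.factorial * (n - 2 * k).factorial)
      * (2 * x) ^ (n - 2 * k)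

/-- Laguerre polynomial `L_n^μ(x) = Σ_{k=0}^n (−1)^k binom(n+μ, n−k) x^k/k!`
(with nonnegative integer parameter `μ`). -/
def laguerreL (n μ : ℕ) (x : ℝ) : ℝ :=
  ∑ k ∈ Finset.range (n + 1),
    (-1) ^ k * (Nat.choose (n + μ) (n - k)) * x ^ k / k.factorial

/-- The Euler operator `θ = x d/dx`. -/
def eulerOp (u : ℝ → ℝ) : ℝ → ℝ := fun x => x * deriv u x

/-- `(θ+c)(θ+c+ν)u − x² u`, i.e. the operator `Q_ν(θ+c)` applied to `u`. -/
def besselQ (ν c : ℝ) (u : ℝ → ℝ) : ℝ → ℝ := fun x =>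
  eulerOp (fun y => eulerOp u y + (c + ν) * u y) x
    + c * (eulerOp u x + (c + ν) * u x) - x ^ 2 * u x

/-- The fourth order differential operator
`D_{μ,ν} = x^{−2}((θ+μ)(θ+μ+ν) − x²)(θ(θ+ν) − x²)`. -/
def Dop (μ ν : ℝ) (u : ℝ → ℝ) : ℝ → ℝ := fun x =>
  besselQ ν μ (besselQ ν 0 u) x / x ^ 2

/-- The generating function
`G^{μ,ν}(t,x) = (1−t)^{−(μ+ν+2)/2} Ĩ_{μ/2}(tx/(1−t)) K̃_{ν/2}(x/(1−t))`. -/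
def genFun (μ ν t x : ℝ) : ℝ :=
  (1 - t) ^ (-(μ + ν + 2) / 2) * besselIt (μ / 2) (t * x / (1 - t))
    * besselKt (ν / 2) (x / (1 - t))

/-- The eigenfunctions `Λ_j^{μ,ν}`, defined as the Taylor coefficients in `t` at `t = 0` of the
generating function `G^{μ,ν}(t,x) = Σ_{j≥0} Λ_j^{μ,ν}(x) t^j`. -/
def LambdaF (μ ν : ℝ) (j : ℕ) (x : ℝ) : ℝ :=
  iteratedDeriv j (fun t => genFun μ ν t x) 0 / j.factorial

/-- The integrality condition: `μ ≥ ν ≥ −1` are integers of the same parity,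
not both equal to `−1`. -/
def IntCond (μ ν : ℤ) : Prop :=
  -1 ≤ ν ∧ ν ≤ μ ∧ Even (μ - ν) ∧ ¬(μ = -1 ∧ ν = -1)

end

/-!
In the variable `z = (x / 2) ^ 2` the normalized Bessel functions become entire, respectively
holomorphic on the right half-plane, and `K̃_α` is the integral
`f_α(z) = ½ ∫₀^∞ e^{-s - z/s} s^{-α-1} ds`. Indeed, for non-integer `α` both this integral and the
combination of series defining `K̃_α` satisfy `f_α' = -f_{α+1}` and `f_α(z) = z^{-α} f_{-α}(z)`,
with the same values at `0` for `-1 < α < 0`; for `0 < b < 1` an energy estimate for the resulting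
linear system for `(f_{-b}, f_{b-1})` shows that they agree, and the two relations propagate this to
all non-integer `α`. Integer `α` follow by continuity in `α`.

Integrating over `z` first, the integral representation gives the Mellin transform
`Γ(c) Γ(c-α) / (2 A^c)` of `z ↦ K̃_α(A z)` at `c`. Integrating `Ĩ_a(q z) K̃_α(A z) z^{a+α}` termwise
in the series of `Ĩ_a`, the Gamma factors cancel and the binomial series sums to
`Γ(a+α+1) / (2 (A - q)^{a+α+1})`. For the generating function `q = (t / (1 - t))²` and
`A = (1 / (1 - t))²`, so that `A - q = (1 + t) / (1 - t)` and the powers of `1 - t` disappear: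
`∫ G(t, x) x^{μ+ν+1} dx` is a multiple of `(1 + t)^{-(μ+ν+2)/2}`, whose Taylor coefficients are the
claimed values. Taking Taylor coefficients under the integral sign is justified by Cauchy estimates,
because for `|t| < 1/4` the generating function extends holomorphically with an integrable majorant.
-/

open scoped Nat Topology

section BesselCliffordI

variable {𝕜 : Type*} [RCLike 𝕜]

/-- The Taylor coefficients `1 / (m! Γ(m + a + 1))` of the Bessel–Clifford function
`besselCliffordI a`; by `Real.Gamma (-n) = 0` they vanish where `Γ` has a pole, as they should. -/
noncomputable def besselCliffordCoeff (a : ℝ) (m : ℕ) : ℝ := 1 / (m ! * Gamma (m + a + 1))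

/-- The Bessel–Clifford function `z ↦ ∑ zᵐ / (m! Γ(m + a + 1))`, over `ℝ` or `ℂ`. It is entire in
`z = (x / 2)²`, where it is the normalized modified Bessel function `Ĩ_a(x)`. -/
noncomputable def besselCliffordI (a : ℝ) (z : 𝕜) : 𝕜 :=
  ∑' m : ℕ, (besselCliffordCoeff a m : 𝕜) * z ^ m

lemma add_one_mul_besselCliffordCoeff_succ (a : ℝ) (m : ℕ) :
    (m + 1) * besselCliffordCoeff a (m + 1) = besselCliffordCoeff (a + 1) m := by
  have hm : (m : ℝ) + 1 ≠ 0 := by positivity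
  have hΓ : ((m + 1 : ℕ) : ℝ) + a + 1 = m + (a + 1) + 1 := by push_cast; ring
  rw [besselCliffordCoeff, besselCliffordCoeff, hΓ, Nat.factorial_succ, Nat.cast_mul,
    Nat.cast_add_one, mul_one_div, mul_assoc, div_mul_cancel_left₀ hm, one_div]

lemma add_mul_besselCliffordCoeff (a : ℝ) (m : ℕ) :
    (m + a) * besselCliffordCoeff a m = besselCliffordCoeff (a - 1) m := by
  have hΓ : (m : ℝ) + (a - 1) + 1 = m + a := by ring
  rw [besselCliffordCoeff, besselCliffordCoeff, hΓ]
  rcases eq_or_ne ((m : ℝ) + a) 0 with h | h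
  · simp [h]
  · rw [Gamma_add_one h, mul_one_div, mul_left_comm, div_mul_cancel_left₀ h, one_div]

lemma besselCliffordCoeff_nonneg {a : ℝ} (ha : -1 ≤ a) (m : ℕ) :
    0 ≤ besselCliffordCoeff a m := by
  have := Gamma_nonneg_of_nonneg (s := m + a + 1) (by linarith [m.cast_nonneg (α := ℝ)])
  unfold besselCliffordCoeff
  positivity

lemma summable_abs_besselCliffordCoeff_mul_pow (a : ℝ) {R : ℝ} (hR : 0 ≤ R) :
    Summable fun m ↦ |besselCliffordCoeff a m| * R ^ m := by
  lift R to NNReal using hR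
  have hrad : (Complex.regularizedHGFunSeries 0 {(a + 1 : ℂ)}).radius = ⊤ :=
    Complex.radius_regularizedHGFunSeries_eq_top (by simp)
  refine ((Complex.regularizedHGFunSeries 0 {(a + 1 : ℂ)}).summable_norm_mul_pow
    (by simp [hrad] : (R : ENNReal) < _)).congr fun m ↦ ?_
  have hΓ : Complex.Gamma (a + 1 + m) = (Gamma (m + a + 1) : ℝ) := by
    rw [← Complex.Gamma_ofReal]; push_cast; ring_nf
  rw [FormalMultilinearSeries.norm_apply_eq_norm_coef,
    Complex.regularizedHGFunSeries_coeff]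
  simp [Complex.regularizedHGFunCoeff, besselCliffordCoeff, hΓ, abs_mul]

lemma hasSum_besselCliffordI (a : ℝ) (z : 𝕜) :
    HasSum (fun m ↦ (besselCliffordCoeff a m : 𝕜) * z ^ m) (besselCliffordI a z) := by
  refine (Summable.of_norm ?_).hasSum
  simpa using summable_abs_besselCliffordCoeff_mul_pow a (norm_nonneg z)

lemma hasSum_besselCliffordI_deriv (a : ℝ) (z : 𝕜) :
    HasSum (fun m : ℕ ↦ (besselCliffordCoeff a m : 𝕜) * (m * z ^ (m - 1)))
      (besselCliffordI (a + 1) z) := by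
  rw [← hasSum_nat_add_iff' 1]
  simp only [Finset.range_one, Finset.sum_singleton, Nat.cast_zero, zero_mul, mul_zero, sub_zero]
  refine (hasSum_besselCliffordI (a + 1) z).congr_fun fun m ↦ ?_
  rw [← add_one_mul_besselCliffordCoeff_succ]
  simp only [RCLike.ofReal_mul, RCLike.ofReal_add, RCLike.ofReal_natCast, RCLike.ofReal_one,
    Nat.cast_add_one, Nat.add_sub_cancel]
  ring

lemma hasDerivAt_besselCliffordI (a : ℝ) (z : 𝕜) :
    HasDerivAt (besselCliffordI a) (besselCliffordI (a + 1) z) z := by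
  have hz : z ∈ ball (0 : 𝕜) (‖z‖ + 1) := by simp
  have hbound : Summable fun m : ℕ ↦ |besselCliffordCoeff a m| * (m * (‖z‖ + 1) ^ (m - 1)) := by
    simpa [abs_of_pos (by positivity : 0 < ‖z‖ + 1)] using
      (hasSum_besselCliffordI_deriv a (‖z‖ + 1)).summable.abs
  rw [← (hasSum_besselCliffordI_deriv a z).tsum_eq]
  refine hasDerivAt_tsum_of_isPreconnected
    (g := fun m y ↦ (besselCliffordCoeff a m : 𝕜) * y ^ m)
    (g' := fun m y ↦ (besselCliffordCoeff a m : 𝕜) * (m * y ^ (m - 1)))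
    hbound isOpen_ball (convex_ball _ _).isPreconnected
    (fun m y _ ↦ (hasDerivAt_pow m y).const_mul _) (fun m y hy ↦ ?_) hz
    (hasSum_besselCliffordI a z).summable hz
  rw [mem_ball_zero_iff] at hy
  rw [norm_mul, norm_mul, norm_pow, RCLike.norm_ofReal, RCLike.norm_natCast]
  gcongr _ * (_ * ?_ ^ _)

lemma continuous_besselCliffordI (a : ℝ) : Continuous (besselCliffordI a : 𝕜 → 𝕜) :=
  continuous_iff_continuousAt.mpr fun z ↦ (hasDerivAt_besselCliffordI a z).continuousAt

lemma mul_besselCliffordI_add_mul_succ (a : ℝ) (z : 𝕜) :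
    a * besselCliffordI a z + z * besselCliffordI (a + 1) z = besselCliffordI (a - 1) z := by
  refine HasSum.unique ?_ (hasSum_besselCliffordI (a - 1) z)
  refine (((hasSum_besselCliffordI a z).mul_left (a : 𝕜)).add
    ((hasSum_besselCliffordI_deriv a z).mul_left z)).congr_fun fun m ↦ ?_
  rw [← add_mul_besselCliffordCoeff]
  rcases m with _ | m
  · simp
  · simp only [RCLike.ofReal_mul, RCLike.ofReal_add, RCLike.ofReal_natCast, Nat.add_sub_cancel]
    ring

lemma besselCliffordI_zero (a : ℝ) : besselCliffordI a (0 : 𝕜) = ((1 / Gamma (a + 1) : ℝ) : 𝕜) := by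
  rw [besselCliffordI, tsum_eq_single 0 fun m hm ↦ by simp [hm]]
  simp [besselCliffordCoeff]

lemma besselCliffordI_ofReal (a y : ℝ) :
    besselCliffordI a (y : 𝕜) = (besselCliffordI a y : ℝ) := by
  simp [besselCliffordI, RCLike.ofReal_tsum]

lemma norm_besselCliffordI_le {a r : ℝ} (ha : -1 ≤ a) {z : 𝕜} (hz : ‖z‖ ≤ r) :
    ‖besselCliffordI a z‖ ≤ besselCliffordI a r := by
  refine tsum_of_norm_bounded (hasSum_besselCliffordI a r) fun m ↦ ?_
  have := besselCliffordCoeff_nonneg ha m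
  rw [norm_mul, norm_pow, RCLike.norm_ofReal, abs_of_nonneg this]
  simp only [RCLike.ofReal_real_eq_id, id]
  gcongr

lemma besselIt_eq_besselCliffordI (a x : ℝ) :
    besselIt a x = besselCliffordI a ((x / 2) ^ 2) := by
  refine tsum_congr fun m ↦ ?_
  rw [besselCliffordCoeff, pow_mul, RCLike.ofReal_real_eq_id, id, one_div_mul_eq_div]

lemma besselI_eq_rpow_mul_besselCliffordI (a : ℝ) {x : ℝ} (hx : 0 < x) :
    besselI a x = (x / 2) ^ a * besselCliffordI a ((x / 2) ^ 2) := by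
  rw [besselI, besselCliffordI, ← tsum_mul_left]
  refine tsum_congr fun m ↦ ?_
  have hpow : (x / 2) ^ (2 * (m : ℝ)) = ((x / 2) ^ 2) ^ m := by
    rw [← pow_mul, ← rpow_natCast, Nat.cast_mul, Nat.cast_ofNat]
  rw [rpow_add (half_pos hx), hpow, besselCliffordCoeff, RCLike.ofReal_real_eq_id, id]
  ring

lemma hasDerivAt_rpow_mul_besselCliffordI (a : ℝ) {y : ℝ} (hy : 0 < y) :
    HasDerivAt (fun z ↦ z ^ a * besselCliffordI a z)
      (y ^ (a - 1) * besselCliffordI (a - 1) y) y := by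
  refine ((hasDerivAt_rpow_const (.inl hy.ne')).mul
    (hasDerivAt_besselCliffordI a y)).congr_deriv ?_
  have hpow : y ^ a = y ^ (a - 1) * y := by rw [← rpow_add_one hy.ne', sub_add_cancel]
  rw [← mul_besselCliffordI_add_mul_succ, hpow, RCLike.ofReal_real_eq_id, id]
  ring

end BesselCliffordI

section BesselCliffordK

/-- The second-kind companion `½ ∫₀^∞ e^{-s - y/s} s^{-β-1} ds` of `besselCliffordI β`; at
`y = (x / 2)²` with `x > 0` it is the normalized modified Bessel function `K̃_β(x)`. -/
noncomputable def besselCliffordK (β y : ℝ) : ℝ :=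
  1 / 2 * ∫ s in Ioi (0 : ℝ), rexp (-s - y / s) * s ^ (-β - 1)

/-- The holomorphic extension of `besselCliffordK β` to the right half-plane. -/
noncomputable def complexBesselCliffordK (β : ℝ) (w : ℂ) : ℂ :=
  1 / 2 * ∫ s in Ioi (0 : ℝ), Complex.exp (-s - w / s) * (s ^ (-β - 1) : ℝ)

lemma complexBesselCliffordK_ofReal (β y : ℝ) :
    complexBesselCliffordK β y = (besselCliffordK β y : ℂ) := by
  rw [complexBesselCliffordK, besselCliffordK, Complex.ofReal_mul, ← integral_complex_ofReal]
  push_cast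
  rfl

lemma besselCliffordK_nonneg (β y : ℝ) : 0 ≤ besselCliffordK β y := by
  refine mul_nonneg one_half_pos.le (setIntegral_nonneg measurableSet_Ioi fun s hs ↦ ?_)
  rw [mem_Ioi] at hs
  positivity

lemma measurable_complexBesselCliffordK (β : ℝ) : Measurable (complexBesselCliffordK β) := by
  have h : StronglyMeasurable fun q : ℂ × ℝ ↦
      Complex.exp (-q.2 - q.1 / q.2) * (q.2 ^ (-β - 1) : ℝ) :=
    Measurable.stronglyMeasurable (by fun_prop)
  exact (h.integral_prod_right' (ν := volume.restrict (Ioi 0))).measurable.const_mul _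

lemma exp_neg_div_le {δ s : ℝ} (hδ : 0 < δ) (hs : 0 < s) (k : ℕ) :
    rexp (-(δ / s)) ≤ k ! / δ ^ k * s ^ k := by
  have h := pow_div_factorial_le_exp (δ / s) (by positivity) k
  rw [exp_neg, inv_le_comm₀ (by positivity) (by positivity)]
  refine h.trans_eq' ?_
  rw [div_pow]
  field_simp

lemma integrableOn_exp_neg_sub_div_mul_rpow {δ : ℝ} (hδ : 0 < δ) (p : ℝ) :
    IntegrableOn (fun s ↦ rexp (-s - δ / s) * s ^ p) (Ioi 0) := by
  obtain ⟨k, hk⟩ := exists_nat_gt (-p - 1)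
  have hΓ := GammaIntegral_convergent (s := p + k + 1) (by linarith)
  refine (hΓ.const_mul (k ! / δ ^ k)).mono' (by fun_prop) ?_
  filter_upwards [ae_restrict_mem measurableSet_Ioi] with s (hs : 0 < s)
  rw [norm_of_nonneg (by positivity), sub_eq_add_neg, exp_add]
  calc rexp (-s) * rexp (-(δ / s)) * s ^ p
      ≤ rexp (-s) * (k ! / δ ^ k * s ^ k) * s ^ p := by
        gcongr; exact exp_neg_div_le hδ hs k
    _ = k ! / δ ^ k * (rexp (-s) * s ^ (p + k + 1 - 1)) := by
        rw [add_sub_cancel_right, rpow_add_natCast hs.ne']; ring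

lemma norm_cexp_neg_sub_div_mul_rpow (p : ℝ) (w : ℂ) {s : ℝ} (hs : 0 < s) :
    ‖Complex.exp (-s - w / s) * (s ^ p : ℝ)‖ = rexp (-s - w.re / s) * s ^ p := by
  rw [norm_mul, Complex.norm_exp, Complex.norm_real, norm_of_nonneg (by positivity)]
  simp

lemma integrableOn_cexp_neg_sub_div_mul_rpow {w : ℂ} (hw : 0 < w.re) (p : ℝ) :
    IntegrableOn (fun s : ℝ ↦ Complex.exp (-s - w / s) * (s ^ p : ℝ)) (Ioi 0) := by
  refine (integrableOn_exp_neg_sub_div_mul_rpow hw p).mono' (by fun_prop) ?_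
  filter_upwards [ae_restrict_mem measurableSet_Ioi] with s hs
  exact (norm_cexp_neg_sub_div_mul_rpow p w hs).le

lemma norm_complexBesselCliffordK_le (β : ℝ) {δ : ℝ} (hδ : 0 < δ) {w : ℂ} (hw : δ ≤ w.re) :
    ‖complexBesselCliffordK β w‖ ≤ besselCliffordK β δ := by
  rw [complexBesselCliffordK, besselCliffordK, norm_mul, norm_div, norm_one, Complex.norm_ofNat]
  gcongr
  refine norm_integral_le_of_norm_le (integrableOn_exp_neg_sub_div_mul_rpow hδ _) ?_
  filter_upwards [ae_restrict_mem measurableSet_Ioi] with s (hs : 0 < s)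
  rw [norm_cexp_neg_sub_div_mul_rpow _ w hs]
  gcongr

lemma hasDerivAt_cexp_neg_sub_div_mul_rpow (p : ℝ) (w : ℂ) {s : ℝ} (hs : 0 < s) :
    HasDerivAt (fun z : ℂ ↦ Complex.exp (-s - z / s) * (s ^ p : ℝ))
      (-(Complex.exp (-s - w / s) * (s ^ (p - 1) : ℝ))) w := by
  have hs' : (s : ℂ) ≠ 0 := Complex.ofReal_ne_zero.mpr hs.ne'
  refine ((((hasDerivAt_id' w).div_const (s : ℂ)).const_sub (-s : ℂ)).cexp.mul_const
    ((s ^ p : ℝ) : ℂ)).congr_deriv ?_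
  rw [rpow_sub_one hs.ne', Complex.ofReal_div]
  field_simp

lemma hasDerivAt_complexBesselCliffordK (β : ℝ) {w : ℂ} (hw : 0 < w.re) :
    HasDerivAt (complexBesselCliffordK β) (-complexBesselCliffordK (β + 1) w) w := by
  have hnhds : {z : ℂ | w.re / 2 < z.re} ∈ 𝓝 w :=
    (isOpen_lt continuous_const Complex.continuous_re).mem_nhds (half_lt_self hw)
  have key := hasDerivAt_integral_of_dominated_loc_of_deriv_le (𝕜 := ℂ)
    (μ := volume.restrict (Ioi (0 : ℝ)))
    (F := fun z s ↦ Complex.exp (-s - z / s) * (s ^ (-β - 1) : ℝ))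
    (F' := fun z s ↦ -(Complex.exp (-s - z / s) * (s ^ (-β - 1 - 1) : ℝ)))
    (bound := fun s ↦ rexp (-s - w.re / 2 / s) * s ^ (-β - 1 - 1))
    hnhds (.of_forall fun z ↦ by fun_prop) (integrableOn_cexp_neg_sub_div_mul_rpow hw _)
    (by fun_prop) ?_ (integrableOn_exp_neg_sub_div_mul_rpow (half_pos hw) _) ?_
  · refine (key.2.const_mul (1 / 2 : ℂ)).congr_deriv ?_
    rw [integral_neg, mul_neg, complexBesselCliffordK, neg_add' β 1]
  · filter_upwards [ae_restrict_mem measurableSet_Ioi] with s (hs : 0 < s) z (hz : _ < _)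
    rw [norm_neg, norm_cexp_neg_sub_div_mul_rpow _ z hs]
    gcongr
  · filter_upwards [ae_restrict_mem measurableSet_Ioi] with s hs z _
    exact hasDerivAt_cexp_neg_sub_div_mul_rpow _ z hs

lemma hasDerivAt_besselCliffordK (β : ℝ) {y : ℝ} (hy : 0 < y) :
    HasDerivAt (besselCliffordK β) (-besselCliffordK (β + 1) y) y := by
  simpa [complexBesselCliffordK_ofReal] using
    (hasDerivAt_complexBesselCliffordK β (w := y) hy).real_of_complex

lemma besselCliffordK_eq_rpow_neg_mul (β : ℝ) {y : ℝ} (hy : 0 < y) :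
    besselCliffordK β y = y ^ (-β) * besselCliffordK (-β) y := by
  have hscale := integral_comp_mul_left_Ioi (fun s ↦ rexp (-s - y / s) * s ^ (-β - 1)) 0 hy
  rw [mul_zero, smul_eq_mul, eq_inv_mul_iff_mul_eq₀ hy.ne',
    ← integral_comp_rpow_Ioi (fun v ↦ rexp (-(y * v) - y / (y * v)) * (y * v) ^ (-β - 1))
      (neg_ne_zero.mpr one_ne_zero)] at hscale
  rw [besselCliffordK, ← hscale, besselCliffordK, mul_left_comm (y ^ (-β))]
  congr 1
  rw [← integral_const_mul, ← integral_const_mul]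
  refine setIntegral_congr_fun measurableSet_Ioi fun s (hs : 0 < s) ↦ ?_
  have hexp : -(y * s⁻¹) - y / (y * s⁻¹) = -s - y / s := by field_simp; ring
  have hs_pow : s ^ (-(-β) - 1) = s ^ ((-1 : ℝ) - 1) * s ^ (-(-β - 1)) := by
    rw [← rpow_add hs]; congr 1; ring
  have hy_pow : y ^ (-β) = y * y ^ (-β - 1) := by rw [mul_comm, ← rpow_add_one hy.ne']; simp
  simp only [smul_eq_mul, abs_neg, abs_one, one_mul, rpow_neg_one]
  rw [mul_rpow hy.le (inv_nonneg.mpr hs.le), inv_rpow hs.le, ← rpow_neg hs.le, hexp, hs_pow,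
    hy_pow]
  ring

lemma continuousOn_besselCliffordK_neg {b : ℝ} (hb : 0 < b) :
    ContinuousOn (besselCliffordK (-b)) (Ici 0) := by
  refine fun y _ ↦ ContinuousWithinAt.const_mul ?_ (1 / 2 : ℝ)
  refine continuousWithinAt_of_dominated (bound := fun s ↦ rexp (-s) * s ^ (b - 1))
    (.of_forall fun z ↦ by fun_prop) ?_ (GammaIntegral_convergent hb)
    (.of_forall fun s ↦ Continuous.continuousWithinAt (by fun_prop))
  filter_upwards [self_mem_nhdsWithin] with z (hz : 0 ≤ z)
  filter_upwards [ae_restrict_mem measurableSet_Ioi] with s (hs : 0 < s)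
  rw [norm_of_nonneg (by positivity), neg_neg]
  gcongr
  exact sub_le_self _ (by positivity)

lemma besselCliffordK_neg_zero {b : ℝ} (hb : 0 < b) :
    besselCliffordK (-b) 0 = 1 / 2 * Gamma b := by
  simp [besselCliffordK, Gamma_eq_integral hb]

lemma rpow_le_rpow_add_rpow {s p q r : ℝ} (hs : 0 < s) (hp : p ≤ q) (hr : q ≤ r) :
    s ^ q ≤ s ^ p + s ^ r := by
  rcases le_total 1 s with h | h
  · exact (rpow_le_rpow_of_exponent_le h hr).trans (le_add_of_nonneg_left (by positivity))
  · exact (rpow_le_rpow_of_exponent_ge hs h hp).trans (le_add_of_nonneg_right (by positivity))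

lemma continuousAt_besselCliffordK_order (α : ℝ) {y : ℝ} (hy : 0 < y) :
    ContinuousAt (fun β ↦ besselCliffordK β y) α := by
  refine ContinuousAt.const_mul ?_ (1 / 2 : ℝ)
  refine continuousAt_of_dominated
    (bound := fun s ↦ rexp (-s - y / s) * s ^ (-α - 2) + rexp (-s - y / s) * s ^ (-α))
    (.of_forall fun β ↦ by fun_prop) ?_ ((integrableOn_exp_neg_sub_div_mul_rpow hy _).add
      (integrableOn_exp_neg_sub_div_mul_rpow hy _)) ?_
  · filter_upwards [ball_mem_nhds α one_pos] with β hβ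
    rw [mem_ball, Real.dist_eq, abs_lt] at hβ
    filter_upwards [ae_restrict_mem measurableSet_Ioi] with s (hs : 0 < s)
    rw [norm_of_nonneg (by positivity), ← mul_add]
    gcongr
    exact rpow_le_rpow_add_rpow hs (by linarith) (by linarith)
  · filter_upwards [ae_restrict_mem measurableSet_Ioi] with s (hs : 0 < s)
    have : ContinuousAt (fun β : ℝ ↦ s ^ (-β - 1)) α :=
      (continuousAt_const_rpow hs.ne').comp (by fun_prop)
    exact this.const_mul _

end BesselCliffordK

section ModifiedBessel

lemma eq_zero_of_hasDerivAt_neg_mul {u v p q P Q : ℝ → ℝ} {a : ℝ}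
    (hu : ContinuousOn u (Ici a)) (hv : ContinuousOn v (Ici a))
    (hP : ContinuousOn P (Ici a)) (hQ : ContinuousOn Q (Ici a))
    (hu' : ∀ y ∈ Ioi a, HasDerivAt u (-(p y * v y)) y)
    (hv' : ∀ y ∈ Ioi a, HasDerivAt v (-(q y * u y)) y)
    (hP' : ∀ y ∈ Ioi a, HasDerivAt P (p y) y) (hQ' : ∀ y ∈ Ioi a, HasDerivAt Q (q y) y)
    (hp : ∀ y ∈ Ioi a, 0 ≤ p y) (hq : ∀ y ∈ Ioi a, 0 ≤ q y)
    (hua : u a = 0) (hva : v a = 0) {y : ℝ} (hy : a ≤ y) : u y = 0 := by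
  -- `(u² + v²)' = -2 (p + q) u v ≤ (p + q) (u² + v²)`, so this energy cannot leave `0`.
  set E : ℝ → ℝ := fun y ↦ (u y ^ 2 + v y ^ 2) * rexp (-(P y + Q y)) with hE
  have hE' : ∀ y ∈ Ioi a,
      HasDerivAt E (-((p y + q y) * (u y + v y) ^ 2 * rexp (-(P y + Q y)))) y := fun y hy ↦ by
    refine ((((hu' y hy).pow 2).add ((hv' y hy).pow 2)).mul
      ((hP' y hy).add (hQ' y hy)).neg.exp).congr_deriv ?_
    simp only [Pi.add_apply, Pi.neg_apply, Pi.pow_apply]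
    ring
  have hanti : AntitoneOn E (Ici a) := by
    refine antitoneOn_of_hasDerivWithinAt_nonpos (convex_Ici a) (by fun_prop)
      (fun y hy ↦ (hE' y (by rwa [interior_Ici] at hy)).hasDerivWithinAt) fun y hy ↦ ?_
    rw [interior_Ici] at hy
    have := hp y hy
    have := hq y hy
    exact neg_nonpos.mpr (by positivity)
  have hE_le : E y ≤ 0 := (hanti self_mem_Ici hy hy).trans_eq (by simp [hE, hua, hva])
  have hsq : u y ^ 2 + v y ^ 2 ≤ 0 := nonpos_of_mul_nonpos_left hE_le (exp_pos _)
  exact pow_eq_zero_iff two_ne_zero |>.mp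
    (le_antisymm (by linarith [sq_nonneg (v y)]) (sq_nonneg _))

/-- The combination of first-kind series that defines `K̃_β` for non-integer `β`, in the variable
`y = (x / 2)²`. -/
noncomputable def besselCliffordKSeries (β y : ℝ) : ℝ :=
  π / (2 * sin (β * π)) * (y ^ (-β) * besselCliffordI (-β) y - besselCliffordI β y)

lemma hasDerivAt_besselCliffordKSeries (β : ℝ) {y : ℝ} (hy : 0 < y) :
    HasDerivAt (besselCliffordKSeries β) (-besselCliffordKSeries (β + 1) y) y := by
  refine (((hasDerivAt_rpow_mul_besselCliffordI (-β) hy).sub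
    (hasDerivAt_besselCliffordI β y)).const_mul (π / (2 * sin (β * π)))).congr_deriv ?_
  rw [besselCliffordKSeries, add_one_mul, sin_add_pi, neg_add', mul_neg, div_neg, neg_mul, neg_neg]

lemma besselCliffordKSeries_eq_rpow_neg_mul (β : ℝ) {y : ℝ} (hy : 0 < y) :
    besselCliffordKSeries β y = y ^ (-β) * besselCliffordKSeries (-β) y := by
  have hpow : y ^ (-β) * y ^ β = 1 := by rw [← rpow_add hy, neg_add_cancel, rpow_zero]
  rw [besselCliffordKSeries, besselCliffordKSeries, neg_mul, sin_neg, mul_neg, div_neg, neg_neg]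
  linear_combination (π / (2 * sin (β * π)) * besselCliffordI β y) * hpow

lemma continuousOn_besselCliffordKSeries_neg {b : ℝ} (hb : 0 < b) :
    ContinuousOn (besselCliffordKSeries (-b)) (Ici 0) := by
  have hpow : Continuous fun y : ℝ ↦ y ^ b := continuous_rpow_const hb.le
  have hI := continuous_besselCliffordI (𝕜 := ℝ)
  unfold besselCliffordKSeries
  rw [neg_neg]
  fun_prop

lemma besselCliffordKSeries_neg_zero {b : ℝ} (hb : b ∈ Ioo 0 1) :
    besselCliffordKSeries (-b) 0 = 1 / 2 * Gamma b := by
  have hΓ : 0 < Gamma (1 - b) := Gamma_pos_of_pos (sub_pos.mpr hb.2)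
  have hsin : 0 < sin (π * b) :=
    sin_pos_of_pos_of_lt_pi (mul_pos pi_pos hb.1) (mul_lt_of_lt_one_right pi_pos hb.2)
  have hrefl : Gamma b = π / sin (π * b) / Gamma (1 - b) :=
    eq_div_of_mul_eq hΓ.ne' (Gamma_mul_Gamma_one_sub b)
  rw [besselCliffordKSeries, neg_neg, zero_rpow hb.1.ne', zero_mul, besselCliffordI_zero, neg_mul,
    sin_neg, mul_comm b, hrefl, neg_add_eq_sub, RCLike.ofReal_real_eq_id, id]
  field_simp
  ring

lemma besselCliffordK_neg_eq_series {b : ℝ} (hb : b ∈ Ioo 0 1) {y : ℝ} (hy : 0 < y) :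
    besselCliffordK (-b) y = besselCliffordKSeries (-b) y := by
  let d (c y : ℝ) : ℝ := besselCliffordK (-c) y - besselCliffordKSeries (-c) y
  have hd {c : ℝ} (hc : 0 < c) : ContinuousOn (d c) (Ici 0) :=
    (continuousOn_besselCliffordK_neg hc).sub (continuousOn_besselCliffordKSeries_neg hc)
  have hd_zero {c : ℝ} (hc : c ∈ Ioo 0 1) : d c 0 = 0 :=
    sub_eq_zero.mpr <|
      (besselCliffordK_neg_zero hc.1).trans (besselCliffordKSeries_neg_zero hc).symm
  have hd' (c : ℝ) (z : ℝ) (hz : 0 < z) : HasDerivAt (d c) (-(z ^ (c - 1) * d (1 - c) z)) z := by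
    refine ((hasDerivAt_besselCliffordK (-c) hz).sub
      (hasDerivAt_besselCliffordKSeries (-c) hz)).congr_deriv ?_
    rw [besselCliffordK_eq_rpow_neg_mul (-c + 1) hz, besselCliffordKSeries_eq_rpow_neg_mul _ hz,
      neg_add_eq_sub, neg_sub]
    simp only [d, neg_sub]
    ring
  have hpow {c : ℝ} (hc : 0 < c) (z : ℝ) (hz : 0 < z) :
      HasDerivAt (fun z : ℝ ↦ z ^ c / c) (z ^ (c - 1)) z :=
    ((hasDerivAt_rpow_const (.inl hz.ne')).div_const c).congr_deriv
      (mul_div_cancel_left₀ _ hc.ne')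
  have hpow_cont {c : ℝ} (hc : 0 < c) : ContinuousOn (fun z : ℝ ↦ z ^ c / c) (Ici 0) :=
    ((continuous_rpow_const hc.le).div_const c).continuousOn
  have hb' : 1 - b ∈ Ioo 0 1 := ⟨sub_pos.mpr hb.2, sub_lt_self 1 hb.1⟩
  refine sub_eq_zero.mp <| eq_zero_of_hasDerivAt_neg_mul (hd hb.1) (hd hb'.1) (hpow_cont hb.1)
    (hpow_cont hb'.1) (hd' b) (fun z hz ↦ ?_) (hpow hb.1) (hpow hb'.1)
    (fun z hz ↦ rpow_nonneg (le_of_lt hz) _) (fun z hz ↦ rpow_nonneg (le_of_lt hz) _) (hd_zero hb)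
    (hd_zero hb') hy.le
  simpa only [sub_sub_cancel] using hd' (1 - b) z hz

lemma besselCliffordK_natCast_sub_eq_series {b : ℝ} (hb : b ∈ Ioo 0 1) (n : ℕ) {y : ℝ}
    (hy : 0 < y) : besselCliffordK (n - b) y = besselCliffordKSeries (n - b) y := by
  induction n generalizing y with
  | zero => simpa only [Nat.cast_zero, zero_sub] using besselCliffordK_neg_eq_series hb hy
  | succ n ih =>
    have heq : besselCliffordK (n - b) =ᶠ[𝓝 y] besselCliffordKSeries (n - b) := by
      filter_upwards [Ioi_mem_nhds hy] with z hz using ih hz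
    have hderiv := (hasDerivAt_besselCliffordK (n - b) hy).unique
      ((hasDerivAt_besselCliffordKSeries (n - b) hy).congr_of_eventuallyEq heq)
    rw [Nat.cast_add_one, add_sub_right_comm]
    exact neg_injective hderiv

lemma besselCliffordK_eq_series {β : ℝ} (hβ : ∀ k : ℤ, β ≠ k) {y : ℝ} (hy : 0 < y) :
    besselCliffordK β y = besselCliffordKSeries β y := by
  have hnonneg : ∀ γ : ℝ, 0 ≤ γ → (∀ k : ℤ, γ ≠ k) →
      besselCliffordK γ y = besselCliffordKSeries γ y := fun γ hγ hint ↦ by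
    have hlt : γ < ⌈γ⌉₊ := (Nat.le_ceil γ).lt_of_ne (by exact_mod_cast hint ⌈γ⌉₊)
    have hb : (⌈γ⌉₊ - γ : ℝ) ∈ Ioo 0 1 :=
      ⟨sub_pos.mpr hlt, sub_lt_iff_lt_add'.mpr (Nat.ceil_lt_add_one hγ)⟩
    simpa only [sub_sub_cancel] using besselCliffordK_natCast_sub_eq_series hb ⌈γ⌉₊ hy
  rcases le_total 0 β with h | h
  · exact hnonneg β h hβ
  · rw [besselCliffordK_eq_rpow_neg_mul β hy, besselCliffordKSeries_eq_rpow_neg_mul β hy,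
      hnonneg (-β) (neg_nonneg.mpr h) fun k hk ↦ hβ (-k) (by rw [Int.cast_neg, ← hk, neg_neg])]

lemma eventually_forall_ne_intCast (α : ℝ) : ∀ᶠ β : ℝ in 𝓝[≠] α, ∀ k : ℤ, β ≠ k := by
  have hclosed : IsClosed ((↑) '' {k : ℤ | (k : ℝ) ≠ α} : Set ℝ) :=
    Int.isClosedEmbedding_coe_real.isClosedMap _ (isClosed_discrete _)
  filter_upwards [nhdsWithin_le_nhds (hclosed.isOpen_compl.mem_nhds (x := α) (by simp)),
    self_mem_nhdsWithin] with β hβ hne k rfl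
  exact hβ ⟨k, hne, rfl⟩

lemma pi_div_two_mul_besselI_sub_div_sin {β x : ℝ} (hβ : ∀ k : ℤ, β ≠ k) (hx : 0 < x) :
    π / 2 * (besselI (-β) x - besselI β x) / sin (β * π)
      = (x / 2) ^ β * besselCliffordK β ((x / 2) ^ 2) := by
  have hpow : (x / 2) ^ (-β) = (x / 2) ^ β * ((x / 2) ^ 2) ^ (-β) := by
    rw [← rpow_natCast, ← rpow_mul (half_pos hx).le, ← rpow_add (half_pos hx)]
    congr 1; push_cast; ring
  rw [besselCliffordK_eq_series hβ (by positivity), besselCliffordKSeries,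
    besselI_eq_rpow_mul_besselCliffordI _ hx, besselI_eq_rpow_mul_besselCliffordI _ hx, hpow]
  ring

theorem besselKt_eq_besselCliffordK (α : ℝ) {x : ℝ} (hx : 0 < x) :
    besselKt α x = besselCliffordK α ((x / 2) ^ 2) := by
  have hx2 : 0 < x / 2 := half_pos hx
  have hcont : ContinuousAt (fun β ↦ (x / 2) ^ β * besselCliffordK β ((x / 2) ^ 2)) α :=
    (continuousAt_const_rpow hx2.ne').mul (continuousAt_besselCliffordK_order α (by positivity))
  have hlim : besselK α x = (x / 2) ^ α * besselCliffordK α ((x / 2) ^ 2) := by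
    refine Tendsto.limUnder_eq ((hcont.tendsto.mono_left nhdsWithin_le_nhds).congr' ?_)
    filter_upwards [eventually_forall_ne_intCast α] with β hβ
    exact (pi_div_two_mul_besselI_sub_div_sin hβ hx).symm
  rw [besselKt, hlim, ← mul_assoc, ← rpow_add hx2, neg_add_cancel, rpow_zero, one_mul]

end ModifiedBessel

section Binomial

lemma Gamma_add_natCast {σ : ℝ} (hσ : 0 < σ) (n : ℕ) :
    Gamma (σ + n) = n ! * (Gamma σ * Ring.choose (σ + n - 1) n) := by
  have hasc : (ascPochhammer ℝ n).eval σ * Gamma σ = Gamma (σ + n) := by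
    induction n with
    | zero => simp
    | succ n ih =>
      rw [ascPochhammer_succ_eval, mul_right_comm, ih, Nat.cast_succ, ← add_assoc,
        Gamma_add_one (by positivity), mul_comm]
  rw [← hasc, ← Polynomial.ascPochhammer_smeval_eq_eval,
    ← Ring.factorial_nsmul_multichoose_eq_ascPochhammer, Ring.multichoose_eq, nsmul_eq_mul]
  ring

lemma hasSum_Gamma_add_div_factorial_mul_pow {σ r : ℝ} (hσ : 0 < σ) (hr : |r| < 1) :
    HasSum (fun m : ℕ ↦ Gamma (σ + m) / m ! * r ^ m) (Gamma σ / (1 - r) ^ σ) := by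
  have h := (one_div_one_sub_rpow_hasFPowerSeriesOnBall_zero σ).hasSum (y := r)
    (by simpa [Metric.mem_eball, edist_dist] using hr)
  simp only [FormalMultilinearSeries.ofScalars_apply_eq, smul_eq_mul, zero_add] at h
  rw [← mul_one_div]
  refine (h.mul_left (Gamma σ)).congr_fun fun m ↦ ?_
  rw [Gamma_add_natCast hσ]
  field_simp

lemma iteratedDeriv_one_add_rpow_neg_zero {σ : ℝ} (hσ : 0 < σ) (j : ℕ) :
    iteratedDeriv j (fun t : ℝ ↦ Gamma σ / (1 + t) ^ σ) 0 = (-1) ^ j * Gamma (σ + j) := by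
  have h := (one_div_one_sub_rpow_hasFPowerSeriesOnBall_zero σ).factorial_smul 1 j
  rw [← iteratedDeriv_eq_iteratedFDeriv, FormalMultilinearSeries.ofScalars_apply_eq] at h
  have hneg := iteratedDeriv_comp_neg j (fun t : ℝ ↦ 1 / (1 - t) ^ σ) 0
  simp only [sub_neg_eq_add, neg_zero, ← h] at hneg
  simp only [div_eq_mul_one_div (Gamma σ)]
  rw [iteratedDeriv_const_mul_field, hneg, Gamma_add_natCast hσ]
  simp only [smul_eq_mul, nsmul_eq_mul, one_pow, mul_one]
  ring

end Binomial

section MellinTransform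

variable {α c A : ℝ}

lemma integral_rpow_mul_exp_neg_sub_div_mul_rpow {s : ℝ} (hc : 0 < c) (hA : 0 < A) (hs : 0 < s) :
    ∫ z in Ioi (0 : ℝ), z ^ (c - 1) * (rexp (-s - A * z / s) * s ^ (-α - 1)) =
      Gamma c / A ^ c * (rexp (-s) * s ^ (c - α - 1)) := by
  have h (z : ℝ) : z ^ (c - 1) * (rexp (-s - A * z / s) * s ^ (-α - 1)) =
      z ^ (c - 1) * rexp (-(A / s * z)) * (rexp (-s) * s ^ (-α - 1)) := by
    rw [sub_eq_add_neg (-s), exp_add, mul_div_right_comm]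
    ring
  simp only [h]
  rw [integral_mul_const, integral_rpow_mul_exp_neg_mul_Ioi hc (by positivity), one_div_div,
    div_rpow hs.le hA.le, show c - α - 1 = c + (-α - 1) by ring, rpow_add hs]
  ring

lemma integrable_prod_rpow_mul_exp_neg_sub_div_mul_rpow (hc : 0 < c) (hαc : α < c) (hA : 0 < A) :
    Integrable (fun p : ℝ × ℝ ↦ p.1 ^ (c - 1) * (rexp (-p.2 - A * p.1 / p.2) * p.2 ^ (-α - 1)))
      ((volume.restrict (Ioi 0)).prod (volume.restrict (Ioi 0))) := by
  refine (integrable_prod_iff' (by fun_prop)).2 ⟨?_, ?_⟩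
  · filter_upwards [ae_restrict_mem measurableSet_Ioi] with s (hs : 0 < s)
    apply Integrable.of_integral_ne_zero
    have := Gamma_pos_of_pos hc
    rw [integral_rpow_mul_exp_neg_sub_div_mul_rpow hc hA hs]
    positivity
  · refine ((GammaIntegral_convergent (sub_pos.2 hαc)).const_mul (Gamma c / A ^ c)).congr ?_
    filter_upwards [ae_restrict_mem measurableSet_Ioi] with s (hs : 0 < s)
    rw [← integral_rpow_mul_exp_neg_sub_div_mul_rpow hc hA hs]
    refine setIntegral_congr_fun measurableSet_Ioi fun z (hz : 0 < z) ↦ ?_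
    exact (norm_of_nonneg (by positivity)).symm

lemma rpow_mul_besselCliffordK_eq_integral (α c A z : ℝ) :
    z ^ (c - 1) * besselCliffordK α (A * z) =
      1 / 2 * ∫ s in Ioi (0 : ℝ), z ^ (c - 1) * (rexp (-s - A * z / s) * s ^ (-α - 1)) := by
  rw [besselCliffordK, integral_const_mul]
  ring

lemma integrableOn_rpow_mul_besselCliffordK (hc : 0 < c) (hαc : α < c) (hA : 0 < A) :
    IntegrableOn (fun z ↦ z ^ (c - 1) * besselCliffordK α (A * z)) (Ioi 0) := by
  simp only [rpow_mul_besselCliffordK_eq_integral]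
  exact (integrable_prod_rpow_mul_exp_neg_sub_div_mul_rpow hc hαc hA).integral_prod_left.const_mul _

lemma integral_rpow_mul_besselCliffordK (hc : 0 < c) (hαc : α < c) (hA : 0 < A) :
    ∫ z in Ioi (0 : ℝ), z ^ (c - 1) * besselCliffordK α (A * z) =
      Gamma c * Gamma (c - α) / (2 * A ^ c) := by
  simp only [rpow_mul_besselCliffordK_eq_integral]
  rw [integral_const_mul,
    integral_integral_swap (integrable_prod_rpow_mul_exp_neg_sub_div_mul_rpow hc hαc hA),
    setIntegral_congr_fun measurableSet_Ioi fun s (hs : 0 < s) ↦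
      integral_rpow_mul_exp_neg_sub_div_mul_rpow hc hA hs,
    integral_const_mul, ← Gamma_eq_integral (sub_pos.2 hαc)]
  ring

end MellinTransform

section MellinTransformProduct

variable {a α q A : ℝ}

lemma rpow_mul_besselCliffordCoeff_mul_besselCliffordK (a α q A : ℝ) (m : ℕ) {z : ℝ}
    (hz : 0 < z) :
    z ^ (a + α + 1 - 1) * (besselCliffordCoeff a m * (q * z) ^ m * besselCliffordK α (A * z)) =
      besselCliffordCoeff a m * q ^ m *
        (z ^ (a + α + 1 + m - 1) * besselCliffordK α (A * z)) := by
  rw [add_sub_right_comm _ (m : ℝ), rpow_add_natCast hz.ne', mul_pow]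
  ring

lemma integrableOn_rpow_mul_besselCliffordCoeff_mul_besselCliffordK (ha : -1 < a)
    (hσ : 0 < a + α + 1) (hA : 0 < A) (m : ℕ) :
    IntegrableOn (fun z ↦ z ^ (a + α + 1 - 1) *
      (besselCliffordCoeff a m * (q * z) ^ m * besselCliffordK α (A * z))) (Ioi 0) := by
  refine IntegrableOn.congr_fun (Integrable.const_mul ?_ (besselCliffordCoeff a m * q ^ m))
    (fun z hz ↦ (rpow_mul_besselCliffordCoeff_mul_besselCliffordK a α q A m hz).symm)
    measurableSet_Ioi
  have := m.cast_nonneg (α := ℝ)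
  exact integrableOn_rpow_mul_besselCliffordK (by linarith) (by linarith) hA

lemma integral_rpow_mul_besselCliffordCoeff_mul_besselCliffordK (ha : -1 < a)
    (hσ : 0 < a + α + 1) (hA : 0 < A) (m : ℕ) :
    ∫ z in Ioi (0 : ℝ), z ^ (a + α + 1 - 1) *
        (besselCliffordCoeff a m * (q * z) ^ m * besselCliffordK α (A * z)) =
      (2 * A ^ (a + α + 1))⁻¹ * (Gamma (a + α + 1 + m) / m ! * (q / A) ^ m) := by
  have := m.cast_nonneg (α := ℝ)
  have hΓ : Gamma (m + a + 1) ≠ 0 := (Gamma_pos_of_pos (by linarith)).ne'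
  rw [setIntegral_congr_fun measurableSet_Ioi fun z hz ↦
      rpow_mul_besselCliffordCoeff_mul_besselCliffordK a α q A m hz,
    integral_const_mul, integral_rpow_mul_besselCliffordK (by linarith) (by linarith) hA,
    rpow_add_natCast hA.ne', show a + α + 1 + m - α = m + a + 1 by ring, besselCliffordCoeff,
    div_pow]
  field_simp

lemma integral_rpow_mul_besselCliffordI_mul_besselCliffordK (ha : -1 < a)
    (hσ : 0 < a + α + 1) (hq : 0 ≤ q) (hqA : q < A) :
    ∫ z in Ioi (0 : ℝ), z ^ (a + α + 1 - 1) *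
        (besselCliffordI a (q * z) * besselCliffordK α (A * z)) =
      Gamma (a + α + 1) / (2 * (A - q) ^ (a + α + 1)) := by
  have hA : 0 < A := hq.trans_lt hqA
  let F : ℕ → ℝ → ℝ := fun m z ↦ z ^ (a + α + 1 - 1) *
    (besselCliffordCoeff a m * (q * z) ^ m * besselCliffordK α (A * z))
  have hF_norm (m : ℕ) : ∫ z in Ioi (0 : ℝ), ‖F m z‖ = ∫ z in Ioi (0 : ℝ), F m z := by
    refine setIntegral_congr_fun measurableSet_Ioi fun z (hz : 0 < z) ↦ norm_of_nonneg ?_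
    have := besselCliffordCoeff_nonneg ha.le m
    have := besselCliffordK_nonneg α (A * z)
    positivity
  have hF_tsum (z : ℝ) : ∑' m, F m z =
      z ^ (a + α + 1 - 1) * (besselCliffordI a (q * z) * besselCliffordK α (A * z)) :=
    (((hasSum_besselCliffordI a (q * z)).mul_right _).mul_left _).tsum_eq
  have hF_integral : HasSum (fun m ↦ ∫ z in Ioi (0 : ℝ), F m z)
      ((2 * A ^ (a + α + 1))⁻¹ * (Gamma (a + α + 1) / (1 - q / A) ^ (a + α + 1))) := by
    simp only [F, integral_rpow_mul_besselCliffordCoeff_mul_besselCliffordK ha hσ hA]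
    refine (hasSum_Gamma_add_div_factorial_mul_pow hσ ?_).mul_left _
    rwa [abs_of_nonneg (by positivity), div_lt_one hA]
  have hmain := hasSum_integral_of_summable_integral_norm (F := F)
    (integrableOn_rpow_mul_besselCliffordCoeff_mul_besselCliffordK ha hσ hA)
    (by simpa only [hF_norm] using hF_integral.summable)
  simp only [hF_tsum] at hmain
  rw [hmain.unique hF_integral, one_sub_div hA.ne', div_rpow (sub_nonneg.2 hqA.le) hA.le]
  field_simp

lemma integrableOn_rpow_mul_besselCliffordI_mul_besselCliffordK (ha : -1 < a)
    (hσ : 0 < a + α + 1) (hq : 0 ≤ q) (hqA : q < A) :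
    IntegrableOn (fun z ↦ z ^ (a + α + 1 - 1) *
      (besselCliffordI a (q * z) * besselCliffordK α (A * z))) (Ioi 0) := by
  -- The integral is positive, whereas a non-integrable function has integral `0`.
  apply Integrable.of_integral_ne_zero
  rw [integral_rpow_mul_besselCliffordI_mul_besselCliffordK ha hσ hq hqA]
  have := Gamma_pos_of_pos hσ
  have := rpow_pos_of_pos (sub_pos.2 hqA) (a + α + 1)
  positivity

end MellinTransformProduct

section DominatedHolomorphic

/-- A family `x ↦ F z x` depending holomorphically on `z ∈ U` and dominated, locally uniformly in
`z`, by integrable functions: exactly what is needed to differentiate `∫ x, F z x ∂m` under the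
integral sign to any order. -/
structure DominatedHolomorphicOn {X : Type*} [MeasurableSpace X] (F : ℂ → X → ℂ) (U : Set ℂ)
    (m : Measure X) : Prop where
  aestronglyMeasurable : ∀ z ∈ U, AEStronglyMeasurable (F z) m
  differentiableOn : ∀ᵐ x ∂m, DifferentiableOn ℂ (F · x) U
  exists_bound : ∀ z ∈ U, ∃ s ∈ 𝓝 z, ∃ B : X → ℝ,
    Integrable B m ∧ ∀ᵐ x ∂m, ∀ w ∈ s, ‖F w x‖ ≤ B x

namespace DominatedHolomorphicOn

variable {X : Type*} [MeasurableSpace X] {m : Measure X} {F : ℂ → X → ℂ} {U : Set ℂ} {z : ℂ}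

lemma integrable (hF : DominatedHolomorphicOn F U m) (hz : z ∈ U) : Integrable (F z) m := by
  obtain ⟨s, hs, B, hB, hFB⟩ := hF.exists_bound z hz
  refine hB.mono' (hF.aestronglyMeasurable z hz) ?_
  filter_upwards [hFB] with x hx using hx z (mem_of_mem_nhds hs)

lemma aestronglyMeasurable_deriv (hF : DominatedHolomorphicOn F U m) (hU : IsOpen U)
    (hz : z ∈ U) : AEStronglyMeasurable (fun x ↦ deriv (F · x) z) m := by
  have hUz : ∀ᶠ w in 𝓝[≠] z, w ∈ U := mem_nhdsWithin_of_mem_nhds (hU.mem_nhds hz)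
  obtain ⟨w, hw, hwU⟩ := exists_seq_forall_of_frequently hUz.frequently
  refine aestronglyMeasurable_of_tendsto_ae atTop (f := fun n x ↦ slope (F · x) z (w n))
    (fun n ↦ ?_) ?_
  · exact ((hF.aestronglyMeasurable _ (hwU n)).sub (hF.aestronglyMeasurable z hz)).const_smul
      (w n - z)⁻¹
  · filter_upwards [hF.differentiableOn] with x hx
    have hderiv := (hx.differentiableAt (hU.mem_nhds hz)).hasDerivAt
    exact (hasDerivAt_iff_tendsto_slope.1 hderiv).comp hw

protected lemma deriv (hF : DominatedHolomorphicOn F U m) (hU : IsOpen U) :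
    DominatedHolomorphicOn (fun z x ↦ deriv (F · x) z) U m where
  aestronglyMeasurable _ hz := hF.aestronglyMeasurable_deriv hU hz
  differentiableOn := by
    filter_upwards [hF.differentiableOn] with x hx using hx.deriv hU
  exists_bound z hz := by
    obtain ⟨s, hs, B, hB, hFB⟩ := hF.exists_bound z hz
    obtain ⟨ε, hε, hεs⟩ := nhds_basis_ball.mem_iff.1 (inter_mem hs (hU.mem_nhds hz))
    refine ⟨ball z (ε / 2), ball_mem_nhds z (by positivity), fun x ↦ B x / (ε / 2),
      hB.div_const _, ?_⟩
    filter_upwards [hFB, hF.differentiableOn] with x hBx hdx w hw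
    have hclosedBall : closedBall w (ε / 2) ⊆ s ∩ U :=
      (closedBall_subset_ball' (by rw [mem_ball] at hw; linarith)).trans hεs
    refine Complex.norm_deriv_le_of_forall_mem_sphere_norm_le (by positivity) ?_
      fun v hv ↦ hBx v (hclosedBall (sphere_subset_closedBall hv)).1
    exact (hdx.mono (hclosedBall.trans inter_subset_right)).diffContOnCl_ball subset_rfl

protected lemma iteratedDeriv (hF : DominatedHolomorphicOn F U m) (hU : IsOpen U) (j : ℕ) :
    DominatedHolomorphicOn (fun z x ↦ iteratedDeriv j (F · x) z) U m := by
  induction j with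
  | zero => simpa using hF
  | succ j ih => simpa only [iteratedDeriv_succ] using ih.deriv hU

lemma hasDerivAt_integral (hF : DominatedHolomorphicOn F U m) (hU : IsOpen U) (hz : z ∈ U) :
    HasDerivAt (fun z ↦ ∫ x, F z x ∂m) (∫ x, deriv (F · x) z ∂m) z := by
  obtain ⟨s, hs, B, hB, hFB⟩ := (hF.deriv hU).exists_bound z hz
  have hUz := hU.mem_nhds hz
  refine (hasDerivAt_integral_of_dominated_loc_of_deriv_le
    (F' := fun z x ↦ deriv (F · x) z) (inter_mem hs hUz)
    (eventually_of_mem hUz hF.aestronglyMeasurable) (hF.integrable hz)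
    (hF.aestronglyMeasurable_deriv hU hz) ?_ hB ?_).2
  · filter_upwards [hFB] with x hx w hw using hx w hw.1
  · filter_upwards [hF.differentiableOn] with x hx w hw
    exact (hx.differentiableAt (hU.mem_nhds hw.2)).hasDerivAt

lemma iteratedDeriv_integral (hF : DominatedHolomorphicOn F U m) (hU : IsOpen U) (j : ℕ)
    (hz : z ∈ U) :
    iteratedDeriv j (fun z ↦ ∫ x, F z x ∂m) z = ∫ x, iteratedDeriv j (F · x) z ∂m := by
  induction j generalizing z with
  | zero => simp
  | succ j ih =>
    simp only [iteratedDeriv_succ]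
    rw [EventuallyEq.deriv_eq (eventually_of_mem (hU.mem_nhds hz) fun w hw ↦ ih hw),
      ((hF.iteratedDeriv hU j).hasDerivAt_integral hU hz).deriv]

end DominatedHolomorphicOn

lemma deriv_ofReal_of_eqOn {F : ℂ → ℂ} {f : ℝ → ℝ} {U : Set ℂ} (hU : IsOpen U)
    (hF : DifferentiableOn ℂ F U) (hFf : ∀ t : ℝ, (t : ℂ) ∈ U → F t = f t) {t : ℝ}
    (ht : (t : ℂ) ∈ U) : deriv F t = (deriv f t : ℝ) := by
  have hderiv := (hF.differentiableAt (hU.mem_nhds ht)).hasDerivAt.comp_ofReal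
  have hnhds : ∀ᶠ s : ℝ in 𝓝 t, (s : ℂ) ∈ U :=
    Complex.continuous_ofReal.continuousAt.eventually (hU.mem_nhds ht)
  have hcast : HasDerivAt (fun s : ℝ ↦ (f s : ℂ)) (deriv F t) t :=
    hderiv.congr_of_eventuallyEq (hnhds.mono fun s hs ↦ (hFf s hs).symm)
  have hreal : HasDerivAt f (deriv F t).re t :=
    Complex.reCLM.hasFDerivAt.comp_hasDerivAt t hcast
  rw [hreal.deriv, ← hcast.unique hreal.ofReal_comp]

lemma iteratedDeriv_ofReal_of_eqOn {F : ℂ → ℂ} {f : ℝ → ℝ} {U : Set ℂ} (hU : IsOpen U)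
    (hF : DifferentiableOn ℂ F U) (hFf : ∀ t : ℝ, (t : ℂ) ∈ U → F t = f t) (j : ℕ) {t : ℝ}
    (ht : (t : ℂ) ∈ U) : iteratedDeriv j F t = (iteratedDeriv j f t : ℝ) := by
  induction j generalizing F f with
  | zero => simpa using hFf t ht
  | succ j ih =>
    rw [iteratedDeriv_succ', iteratedDeriv_succ']
    exact ih (hF.deriv hU) fun s hs ↦ deriv_ofReal_of_eqOn hU hF hFf hs

end DominatedHolomorphic

section QuadraticSubstitution

variable {g : ℝ → ℝ} {σ : ℝ}

lemma comp_half_sq_mul_rpow {x : ℝ} (hx : 0 < x) :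
    g ((x / 2) ^ 2) * x ^ (2 * σ - 1) = 2 ^ (2 * σ - 2) *
      ((2 * (2⁻¹ * x) ^ (2 - 1 : ℝ)) •
        (((2⁻¹ * x) ^ (2 : ℝ)) ^ (σ - 1) * g ((2⁻¹ * x) ^ (2 : ℝ)))) := by
  obtain ⟨y, rfl⟩ : ∃ y, x = 2 * y := ⟨x / 2, by ring⟩
  have hy : 0 < y := by linarith
  rw [mul_div_cancel_left₀ _ two_ne_zero, inv_mul_cancel_left₀ two_ne_zero, ← rpow_mul hy.le,
    mul_rpow two_pos.le hy.le, show 2 * σ - 1 = 2 * (σ - 1) + 1 by ring,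
    show 2 * σ - 2 = 2 * (σ - 1) by ring, rpow_add_one two_ne_zero, rpow_add_one hy.ne',
    show (2 : ℝ) - 1 = 1 by norm_num, rpow_one, rpow_two, smul_eq_mul]
  ring

lemma integral_comp_half_sq_mul_rpow :
    ∫ x in Ioi (0 : ℝ), g ((x / 2) ^ 2) * x ^ (2 * σ - 1) =
      2 ^ (2 * σ - 1) * ∫ z in Ioi (0 : ℝ), z ^ (σ - 1) * g z := by
  rw [setIntegral_congr_fun measurableSet_Ioi fun x hx ↦ comp_half_sq_mul_rpow hx,
    integral_const_mul, integral_comp_mul_left_Ioi (fun y ↦ (2 * y ^ (2 - 1 : ℝ)) •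
      ((y ^ (2 : ℝ)) ^ (σ - 1) * g (y ^ (2 : ℝ)))) 0 (inv_pos.2 two_pos), mul_zero,
    integral_comp_rpow_Ioi_of_pos (g := fun z ↦ z ^ (σ - 1) * g z) two_pos, inv_inv, smul_eq_mul,
    show 2 * σ - 1 = 2 * σ - 2 + 1 by ring, rpow_add_one two_ne_zero, mul_assoc]

lemma integrableOn_comp_half_sq_mul_rpow (hg : IntegrableOn (fun z ↦ z ^ (σ - 1) * g z) (Ioi 0)) :
    IntegrableOn (fun x ↦ g ((x / 2) ^ 2) * x ^ (2 * σ - 1)) (Ioi 0) := by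
  refine IntegrableOn.congr_fun (Integrable.const_mul ?_ (2 ^ (2 * σ - 2)))
    (fun x hx ↦ (comp_half_sq_mul_rpow hx).symm) measurableSet_Ioi
  have h := (integrableOn_Ioi_comp_rpow_iff _ two_ne_zero).2 hg
  rw [abs_two] at h
  exact (integrableOn_Ioi_comp_mul_left_iff _ 0 (inv_pos.2 two_pos)).2 (by rwa [mul_zero])

end QuadraticSubstitution

section GeneratingFunction

variable {μ ν : ℝ}

lemma genFun_eq_besselClifford (μ ν : ℝ) {t x : ℝ} (ht : t < 1) (hx : 0 < x) :
    genFun μ ν t x = (1 - t) ^ (-(μ + ν + 2) / 2) *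
      (besselCliffordI (μ / 2) ((t / (1 - t)) ^ 2 * (x / 2) ^ 2) *
        besselCliffordK (ν / 2) ((1 / (1 - t)) ^ 2 * (x / 2) ^ 2)) := by
  have hx' : 0 < x / (1 - t) := div_pos hx (sub_pos.2 ht)
  rw [genFun, besselIt_eq_besselCliffordI, besselKt_eq_besselCliffordK _ hx', mul_assoc]
  ring_nf

lemma integrableOn_besselClifford_half_sq_mul_rpow (hμ : -2 < μ) (hμν : -2 < μ + ν) {q A : ℝ}
    (hq : 0 ≤ q) (hqA : q < A) :
    IntegrableOn (fun x ↦ besselCliffordI (μ / 2) (q * (x / 2) ^ 2) *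
      besselCliffordK (ν / 2) (A * (x / 2) ^ 2) * x ^ (μ + ν + 1)) (Ioi 0) := by
  have h := integrableOn_comp_half_sq_mul_rpow
    (integrableOn_rpow_mul_besselCliffordI_mul_besselCliffordK (a := μ / 2) (α := ν / 2)
      (by linarith) (by linarith) hq hqA)
  rwa [show 2 * (μ / 2 + ν / 2 + 1) - 1 = μ + ν + 1 by ring] at h

lemma integral_besselClifford_half_sq_mul_rpow (hμ : -2 < μ) (hμν : -2 < μ + ν) {q A : ℝ}
    (hq : 0 ≤ q) (hqA : q < A) :
    ∫ x in Ioi (0 : ℝ), besselCliffordI (μ / 2) (q * (x / 2) ^ 2) *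
        besselCliffordK (ν / 2) (A * (x / 2) ^ 2) * x ^ (μ + ν + 1) =
      2 ^ (μ + ν) * (Gamma ((μ + ν + 2) / 2) / (A - q) ^ ((μ + ν + 2) / 2)) := by
  have h := integral_rpow_mul_besselCliffordI_mul_besselCliffordK (a := μ / 2) (α := ν / 2)
    (by linarith) (by linarith) hq hqA
  rw [show μ + ν + 1 = 2 * (μ / 2 + ν / 2 + 1) - 1 by ring, integral_comp_half_sq_mul_rpow
    (g := fun z ↦ besselCliffordI (μ / 2) (q * z) * besselCliffordK (ν / 2) (A * z)), h,
    show μ / 2 + ν / 2 + 1 = (μ + ν + 2) / 2 by ring,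
    show 2 * ((μ + ν + 2) / 2) - 1 = μ + ν + 1 by ring, rpow_add_one two_ne_zero]
  field_simp

lemma integral_genFun_mul_rpow (hμ : -2 < μ) (hμν : -2 < μ + ν) {t : ℝ} (ht : |t| < 1) :
    ∫ x in Ioi (0 : ℝ), genFun μ ν t x * x ^ (μ + ν + 1) =
      2 ^ (μ + ν) * (Gamma ((μ + ν + 2) / 2) / (1 + t) ^ ((μ + ν + 2) / 2)) := by
  obtain ⟨ht', ht⟩ := abs_lt.1 ht
  have hsub : 0 < 1 - t := by linarith
  have hadd : 0 < 1 + t := by linarith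
  have hdiff : (1 / (1 - t)) ^ 2 - (t / (1 - t)) ^ 2 = (1 + t) / (1 - t) := by
    field_simp
    ring
  have hlt : (t / (1 - t)) ^ 2 < (1 / (1 - t)) ^ 2 := by
    rw [← sub_pos, hdiff]
    positivity
  rw [setIntegral_congr_fun measurableSet_Ioi fun x hx ↦ by
      rw [genFun_eq_besselClifford μ ν ht hx, mul_assoc],
    integral_const_mul, integral_besselClifford_half_sq_mul_rpow hμ hμν (sq_nonneg _) hlt, hdiff,
    div_rpow hadd.le hsub.le, neg_div, rpow_neg hsub.le]
  field_simp

/-- The holomorphic extension of `genFun μ ν · x` to complex `t` near `0`, for `x > 0`. -/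
noncomputable def complexGenFun (μ ν : ℝ) (t : ℂ) (x : ℝ) : ℂ :=
  (1 - t) ^ ((-(μ + ν + 2) / 2 : ℝ) : ℂ) *
    (besselCliffordI (μ / 2) ((t / (1 - t)) ^ 2 * ((x / 2) ^ 2 : ℝ)) *
      complexBesselCliffordK (ν / 2) ((1 / (1 - t)) ^ 2 * ((x / 2) ^ 2 : ℝ)))

lemma complexGenFun_ofReal (μ ν : ℝ) {t x : ℝ} (ht : t < 1) (hx : 0 < x) :
    complexGenFun μ ν t x = (genFun μ ν t x : ℂ) := by
  have hI (y : ℝ) : besselCliffordI (μ / 2) (y : ℂ) = (besselCliffordI (μ / 2) y : ℝ) :=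
    besselCliffordI_ofReal _ y
  rw [genFun_eq_besselClifford μ ν ht hx, complexGenFun]
  push_cast [Complex.ofReal_cpow (sub_nonneg.2 ht.le), ← complexBesselCliffordK_ofReal, ← hI]
  rfl

lemma three_quarters_le_norm_one_sub {t : ℂ} (ht : ‖t‖ < 1 / 4) : 3 / 4 ≤ ‖1 - t‖ := by
  have := norm_sub_norm_le 1 t
  rw [norm_one] at this
  linarith

lemma one_sub_ne_zero_of_norm_lt {t : ℂ} (ht : ‖t‖ < 1 / 4) : 1 - t ≠ 0 :=
  norm_pos_iff.1 (by linarith [three_quarters_le_norm_one_sub ht])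

lemma norm_div_one_sub_le {t : ℂ} (ht : ‖t‖ < 1 / 4) : ‖t / (1 - t)‖ ≤ 1 / 3 := by
  have := three_quarters_le_norm_one_sub ht
  rw [norm_div, div_le_iff₀ (by linarith)]
  linarith

lemma two_ninths_le_re_sq_one_div_one_sub {t : ℂ} (ht : ‖t‖ < 1 / 4) :
    2 / 9 ≤ ((1 / (1 - t)) ^ 2).re := by
  set u := t / (1 - t) with hu
  have hsq : (1 / (1 - t)) ^ 2 = 1 + (2 * u + u ^ 2) := by
    have := one_sub_ne_zero_of_norm_lt ht
    rw [hu]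
    field_simp
    ring
  have hnorm : ‖2 * u + u ^ 2‖ ≤ 2 * (1 / 3) + (1 / 3) ^ 2 := by
    refine (norm_add_le _ _).trans ?_
    rw [norm_mul, norm_pow, Complex.norm_two]
    gcongr <;> exact norm_div_one_sub_le ht
  have hre := (abs_le.1 ((Complex.abs_re_le_norm _).trans hnorm)).1
  rw [hsq, Complex.add_re, Complex.one_re]
  linarith

lemma differentiableOn_complexGenFun (μ ν : ℝ) {x : ℝ} (hx : 0 < x) :
    DifferentiableOn ℂ (complexGenFun μ ν · x) (ball 0 (1 / 4)) := by
  intro t ht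
  rw [mem_ball_zero_iff] at ht
  have hne := one_sub_ne_zero_of_norm_lt ht
  have hre := two_ninths_le_re_sq_one_div_one_sub ht
  have hslit : 1 - t ∈ Complex.slitPlane := by
    refine Complex.mem_slitPlane_iff.2 (.inl ?_)
    have := (Complex.re_le_norm t).trans_lt ht
    rw [Complex.sub_re, Complex.one_re]
    linarith
  refine DifferentiableAt.differentiableWithinAt (.mul ?_ (.mul ?_ ?_))
  · exact (by fun_prop : DifferentiableAt ℂ (fun t ↦ 1 - t) t).cpow_const hslit
  · exact (hasDerivAt_besselCliffordI _ _).differentiableAt.comp t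
      (f := fun t : ℂ ↦ (t / (1 - t)) ^ 2 * ((x / 2) ^ 2 : ℝ)) (by fun_prop (disch := assumption))
  · refine (hasDerivAt_complexBesselCliffordK _ ?_).differentiableAt.comp t
      (f := fun t : ℂ ↦ (1 / (1 - t)) ^ 2 * ((x / 2) ^ 2 : ℝ)) (by fun_prop (disch := assumption))
    rw [Complex.re_mul_ofReal]
    positivity

lemma norm_complexGenFun_le (hμ : -2 < μ) (hμν : -2 < μ + ν) {t : ℂ} (ht : ‖t‖ < 1 / 4) {x : ℝ}
    (hx : 0 < x) :
    ‖complexGenFun μ ν t x‖ ≤ (3 / 4) ^ (-(μ + ν + 2) / 2) *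
      (besselCliffordI (μ / 2) (1 / 9 * (x / 2) ^ 2) *
        besselCliffordK (ν / 2) (2 / 9 * (x / 2) ^ 2)) := by
  rw [complexGenFun, norm_mul, norm_mul, Complex.norm_cpow_real]
  have hI : ‖besselCliffordI (μ / 2) ((t / (1 - t)) ^ 2 * ((x / 2) ^ 2 : ℝ))‖ ≤
      besselCliffordI (μ / 2) (1 / 9 * (x / 2) ^ 2) := by
    refine norm_besselCliffordI_le (by linarith) ?_
    rw [norm_mul, norm_pow, Complex.norm_of_nonneg (by positivity),
      show (1 / 9 : ℝ) = (1 / 3) ^ 2 by norm_num]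
    gcongr
    exact norm_div_one_sub_le ht
  have hK : ‖complexBesselCliffordK (ν / 2) ((1 / (1 - t)) ^ 2 * ((x / 2) ^ 2 : ℝ))‖ ≤
      besselCliffordK (ν / 2) (2 / 9 * (x / 2) ^ 2) := by
    refine norm_complexBesselCliffordK_le _ (by positivity) ?_
    rw [Complex.re_mul_ofReal]
    gcongr
    exact two_ninths_le_re_sq_one_div_one_sub ht
  have hpow : ‖1 - t‖ ^ (-(μ + ν + 2) / 2) ≤ (3 / 4) ^ (-(μ + ν + 2) / 2) :=
    rpow_le_rpow_of_nonpos (by norm_num) (three_quarters_le_norm_one_sub ht) (by linarith)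
  have := (norm_nonneg _).trans hI
  gcongr

lemma measurable_complexGenFun (μ ν : ℝ) (t : ℂ) : Measurable (complexGenFun μ ν t) := by
  have hI := (continuous_besselCliffordI (𝕜 := ℂ) (μ / 2)).measurable
  have hK := measurable_complexBesselCliffordK (ν / 2)
  unfold complexGenFun
  fun_prop

lemma dominatedHolomorphicOn_complexGenFun_mul_rpow (hμ : -2 < μ) (hμν : -2 < μ + ν) :
    DominatedHolomorphicOn (fun t x ↦ complexGenFun μ ν t x * (x ^ (μ + ν + 1) : ℝ))
      (ball 0 (1 / 4)) (volume.restrict (Ioi 0)) where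
  aestronglyMeasurable t _ := by
    have := measurable_complexGenFun μ ν t
    fun_prop
  differentiableOn := by
    filter_upwards [ae_restrict_mem measurableSet_Ioi] with x hx
    exact (differentiableOn_complexGenFun μ ν hx).mul_const _
  exists_bound t ht := by
    refine ⟨_, isOpen_ball.mem_nhds ht, _,
      (integrableOn_besselClifford_half_sq_mul_rpow hμ hμν (q := 1 / 9) (A := 2 / 9)
        (by norm_num) (by norm_num)).const_mul ((3 / 4) ^ (-(μ + ν + 2) / 2)), ?_⟩
    filter_upwards [ae_restrict_mem measurableSet_Ioi] with x (hx : 0 < x) w hw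
    rw [norm_mul, Complex.norm_of_nonneg (by positivity), ← mul_assoc]
    gcongr
    exact norm_complexGenFun_le hμ hμν (mem_ball_zero_iff.1 hw) hx

lemma iteratedDeriv_complexGenFun_mul_rpow (μ ν : ℝ) (j : ℕ) {x : ℝ} (hx : 0 < x) :
    iteratedDeriv j (fun t ↦ complexGenFun μ ν t x * (x ^ (μ + ν + 1) : ℝ)) 0 =
      ((j ! * (LambdaF μ ν j x * x ^ (μ + ν + 1)) : ℝ) : ℂ) := by
  have h := iteratedDeriv_ofReal_of_eqOn (f := fun t ↦ genFun μ ν t x * x ^ (μ + ν + 1))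
    isOpen_ball ((differentiableOn_complexGenFun μ ν hx).mul_const (x ^ (μ + ν + 1) : ℝ))
    (fun t ht ↦ ?_) j (t := 0) (by simp)
  · rw [← Complex.ofReal_zero, h, iteratedDeriv_mul_const_field, LambdaF]
    field_simp
  · have ht : |t| < 1 / 4 := by simpa using ht
    rw [complexGenFun_ofReal μ ν (by linarith [le_abs_self t]) hx, Complex.ofReal_mul]

lemma integral_complexGenFun_mul_rpow (hμ : -2 < μ) (hμν : -2 < μ + ν) {t : ℝ} (ht : |t| < 1) :
    ∫ x in Ioi (0 : ℝ), complexGenFun μ ν t x * (x ^ (μ + ν + 1) : ℝ) =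
      (2 ^ (μ + ν) * (Gamma ((μ + ν + 2) / 2) / (1 + t) ^ ((μ + ν + 2) / 2)) : ℝ) := by
  rw [← integral_genFun_mul_rpow hμ hμν ht, ← integral_complex_ofReal]
  refine setIntegral_congr_fun measurableSet_Ioi fun x hx ↦ ?_
  simp only [complexGenFun_ofReal μ ν (abs_lt.1 ht).2 hx, Complex.ofReal_mul]

lemma integrableOn_LambdaF_mul_rpow (hμ : -2 < μ) (hμν : -2 < μ + ν) (j : ℕ) :
    IntegrableOn (fun x ↦ LambdaF μ ν j x * x ^ (μ + ν + 1)) (Ioi 0) := by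
  have hF := dominatedHolomorphicOn_complexGenFun_mul_rpow hμ hμν
  have h := ((hF.iteratedDeriv isOpen_ball j).integrable
    (mem_ball_self (by norm_num))).re.const_mul (j ! : ℝ)⁻¹
  refine IntegrableOn.congr_fun h (fun x hx ↦ ?_) measurableSet_Ioi
  simp only [iteratedDeriv_complexGenFun_mul_rpow μ ν j hx]
  rw [RCLike.re_eq_complex_re, Complex.ofReal_re, inv_mul_cancel_left₀ (by positivity)]

lemma factorial_mul_integral_LambdaF_mul_rpow (hμ : -2 < μ) (hμν : -2 < μ + ν) (j : ℕ) :
    j ! * ∫ x in Ioi (0 : ℝ), LambdaF μ ν j x * x ^ (μ + ν + 1) =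
      2 ^ (μ + ν) * ((-1) ^ j * Gamma ((μ + ν + 2) / 2 + j)) := by
  have hF := dominatedHolomorphicOn_complexGenFun_mul_rpow hμ hμν
  have h0 : (0 : ℂ) ∈ ball 0 (1 / 4 : ℝ) := mem_ball_self (by norm_num)
  have hleft : iteratedDeriv j (fun t ↦ ∫ x in Ioi (0 : ℝ),
      complexGenFun μ ν t x * (x ^ (μ + ν + 1) : ℝ)) 0 =
      (j ! * ∫ x in Ioi (0 : ℝ), LambdaF μ ν j x * x ^ (μ + ν + 1) : ℝ) := by
    rw [hF.iteratedDeriv_integral isOpen_ball j h0, ← integral_const_mul,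
      ← integral_complex_ofReal]
    exact setIntegral_congr_fun measurableSet_Ioi fun x hx ↦
      iteratedDeriv_complexGenFun_mul_rpow μ ν j hx
  have hright := iteratedDeriv_ofReal_of_eqOn isOpen_ball
    (fun t ht ↦ (hF.hasDerivAt_integral isOpen_ball ht).differentiableAt.differentiableWithinAt)
    (fun t ht ↦ integral_complexGenFun_mul_rpow hμ hμν ?_) j (t := 0) (by simp)
  · rw [Complex.ofReal_zero, hleft, iteratedDeriv_const_mul_field,
      iteratedDeriv_one_add_rpow_neg_zero (by linarith)] at hright
    exact_mod_cast hright
  · have ht : |t| < 1 / 4 := by simpa using ht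
    linarith

end GeneratingFunction

theorem lambda_L1_integral_general {μ ν : ℝ} (hμ : -2 < μ) (hμν : -2 < μ + ν) (j : ℕ) :
    IntegrableOn (fun x ↦ LambdaF μ ν j x * x ^ (μ + ν + 1)) (Ioi 0) ∧
      ∫ x in Ioi (0 : ℝ), LambdaF μ ν j x * x ^ (μ + ν + 1) =
        (-1) ^ j * 2 ^ (μ + ν) * Gamma (j + (μ + ν + 2) / 2) / j ! := by
  refine ⟨integrableOn_LambdaF_mul_rpow hμ hμν j, ?_⟩
  rw [eq_div_iff (by positivity), mul_comm, factorial_mul_integral_LambdaF_mul_rpow hμ hμν,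
    add_comm (j : ℝ)]
  ring

/-- **Lemma 3.2.** `Λ_j^{μ,ν} ∈ L¹(ℝ_+, x^{μ+ν+1}dx)` and
`∫₀^∞ Λ_j^{μ,ν}(x) x^{μ+ν+1} dx = (−1)^j 2^{μ+ν} Γ(j+(μ+ν+2)/2)/j!`. -/
theorem lambda_L1_integral (μ ν : ℤ) (hcond : IntCond μ ν) (j : ℕ) :
    MeasureTheory.IntegrableOn
        (fun x => LambdaF μ ν j x * x ^ ((μ : ℝ) + ν + 1)) (Set.Ioi 0)
      ∧ ∫ x in Set.Ioi (0 : ℝ), LambdaF μ ν j x * x ^ ((μ : ℝ) + ν + 1)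
        = (-1) ^ j * (2 : ℝ) ^ ((μ : ℝ) + ν) * Real.Gamma (j + ((μ : ℝ) + ν + 2) / 2)
            / j.factorial := by
  obtain ⟨hν, hνμ, -, hne⟩ := hcond
  have hμν : -2 < μ + ν := by omega
  exact lambda_L1_integral_general (by exact_mod_cast (by omega : -2 < μ)) (by exact_mod_cast hμν) j
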